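/- arXiv:0904.2288 — 2 statements merged into one kernel-verified Lean document; each statement's English description precedes it below -/
import Mathlib

section
/- For every r > 0 and every t ≥ 0, e^{−r e^t} + r ∫₀ᵗ 1_{\{r e^s ≠ e\}} e^s e^{−r e^s} ds = e^{−r}. In other words, the deterministic process X_t := e^t on E = (0,∞) makes the process t ↦ f_r(X_t) − ∫₀ᵗ A₁ f_r(X_s) ds constant (hence a martingale), where f_r(x) := e^{−r x} and A₁ f_r(x) := −1_{\{r x ≠ e\}} r x e^{−r x}. -/
open MeasureTheory Set

section

variable {E : Type*} [NormedAddCommGroup E] [NormedSpace ℝ E] {a b : ℝ}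

theorem integral_indicator_compl_comp_of_injective {α : Type*} {μ : Measure ℝ}
    [NullSingletonClass μ] {X : ℝ → α} (hX : Function.Injective X) {N : Set α} (hN : N.Countable)
    (g : α → E) :
    ∫ s in a..b, Nᶜ.indicator g (X s) ∂μ = ∫ s in a..b, g (X s) ∂μ := by
  apply intervalIntegral.integral_congr_ae
  filter_upwards [(hN.preimage hX).ae_notMem μ] with s hs _
  exact indicator_of_mem hs g

theorem integral_exp_smul_deriv_comp_exp [CompleteSpace E] {f f' : ℝ → E}
    (hf : ∀ x, 0 < x → HasDerivAt f (f' x) x) (hf' : ContinuousOn f' (Ioi 0)) :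
    ∫ s in a..b, Real.exp s • f' (Real.exp s) = f (Real.exp b) - f (Real.exp a) := by
  apply intervalIntegral.integral_eq_sub_of_hasDerivAt (f := fun s => f (Real.exp s))
  · intro s _
    exact (hf _ (Real.exp_pos s)).scomp s (Real.hasDerivAt_exp s)
  · have hcomp : Continuous fun s => f' (Real.exp s) :=
      hf'.comp_continuous Real.continuous_exp Real.exp_pos
    exact (Real.continuous_exp.smul hcomp).intervalIntegrable a b

end

theorem hasDerivAt_exp_neg_mul (r x : ℝ) :
    HasDerivAt (fun y => Real.exp (-(r * y))) (-r * Real.exp (-(r * x))) x := by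
  have hlin : HasDerivAt (fun y => -(r * y)) (-r) x := by
    simpa only [neg_mul] using hasDerivAt_const_mul (-r)
  simpa only [mul_comm] using hlin.exp

theorem subsingleton_setOf_mul_eq {M₀ : Type*} [MulZeroClass M₀] [IsLeftCancelMulZero M₀] (r : M₀)
    {c : M₀} (hc : c ≠ 0) : {x | r * x = c}.Subsingleton := by
  intro x (hx : r * x = c) y (hy : r * y = c)
  have hr : r ≠ 0 := left_ne_zero_of_mul (hx.trans_ne hc)
  exact mul_left_cancel₀ hr (hx.trans hy.symm)

theorem counterexample_martingale_problem_verification_general (r t : ℝ) :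
    Real.exp (-(r * Real.exp t))
      + r * ∫ s in (0 : ℝ)..t,
          (if r * Real.exp s ≠ Real.exp 1 then (1 : ℝ) else 0)
            * Real.exp s * Real.exp (-(r * Real.exp s))
      = Real.exp (-r) := by
  let N : Set ℝ := {x | r * x = Real.exp 1}
  let A₁f : ℝ → ℝ := Nᶜ.indicator fun x => x * (-r * Real.exp (-(r * x)))
  have hN : N.Countable := (subsingleton_setOf_mul_eq r (Real.exp_ne_zero 1)).countable
  have integral_A₁f : ∫ s in (0 : ℝ)..t, A₁f (Real.exp s)
      = Real.exp (-(r * Real.exp t)) - Real.exp (-r) := calc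
    _ = ∫ s in (0 : ℝ)..t, Real.exp s * (-r * Real.exp (-(r * Real.exp s))) :=
      integral_indicator_compl_comp_of_injective Real.exp_injective hN _
    _ = Real.exp (-(r * Real.exp t)) - Real.exp (-(r * Real.exp 0)) :=
      integral_exp_smul_deriv_comp_exp (fun x _ => hasDerivAt_exp_neg_mul r x) (by fun_prop)
    _ = _ := by rw [Real.exp_zero, mul_one]
  have A₁f_exp (s : ℝ) : A₁f (Real.exp s)
      = -r * ((if r * Real.exp s ≠ Real.exp 1 then (1 : ℝ) else 0)
          * Real.exp s * Real.exp (-(r * Real.exp s))) := by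
    simp only [A₁f, N, indicator_apply, mem_compl_iff, mem_ofPred_eq, ne_eq]
    split_ifs <;> ring
  simp only [A₁f_exp, intervalIntegral.integral_const_mul] at integral_A₁f
  linarith

/-- Verification in the counterexample of the correction note: the deterministic
process `X_t = e^t` makes `t ↦ f_r(X_t) − ∫₀ᵗ A₁ f_r(X_s) ds` constantly equal to
`f_r(X_0) = e^{−r}`, where `f_r(x) = e^{−rx}` and
`A₁ f_r(x) = −1_{{rx ≠ e}} r x e^{−rx}`. -/
theorem counterexample_martingale_problem_verification :
    ∀ r : ℝ, 0 < r → ∀ t : ℝ, 0 ≤ t →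
      Real.exp (-(r * Real.exp t))
        + r * ∫ s in (0 : ℝ)..t,
            (if r * Real.exp s ≠ Real.exp 1 then (1 : ℝ) else 0)
              * Real.exp s * Real.exp (-(r * Real.exp s))
        = Real.exp (-r) :=
  fun r _ t _ => counterexample_martingale_problem_verification_general r t
end

section
/- Define R : (0,∞) × (0,∞) → ℝ by R(x₁, x₂) := 1_{\{x₁ x₂ = e\}} x₁ x₂ e^{−x₁ x₂}. Then for every T ≥ 0, ∫₀ᵀ R(e^t, e^{T−t}) dt = 1_{\{T = 1\}} e^{1−e}. In particular, taking Ψ(x₁,x₂) := e^{−x₁x₂} and the deterministic processes X¹_t = X²_t = e^t, the left-hand side Ψ(X¹_T, X²_0) − Ψ(X¹_0, X²_T) = e^{−e^T} − e^{−e^T} = 0 for all T ≥ 0, while the right-hand side ∫₀ᵀ R(X¹_t, X²_{T−t}) dt equals e^{1−e} ≠ 0 at T = 1; hence the duality identity 'LHS = RHS' holds for Lebesgue-almost every T but fails at T = 1. -/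
open MeasureTheory Set

/-- The error term of the counterexample:
`R(x₁,x₂) = 1_{{x₁x₂ = e}} x₁ x₂ e^{−x₁x₂}`. -/
noncomputable def counterexampleR (x₁ x₂ : ℝ) : ℝ :=
  if x₁ * x₂ = Real.exp 1 then x₁ * x₂ * Real.exp (-(x₁ * x₂)) else 0

/-- The duality function of the counterexample: `Ψ(x₁,x₂) = e^{−x₁x₂}`. -/
noncomputable def counterexamplePsi (x₁ x₂ : ℝ) : ℝ := Real.exp (-(x₁ * x₂))

theorem counterexamplePsi_comm (x₁ x₂ : ℝ) :
    counterexamplePsi x₁ x₂ = counterexamplePsi x₂ x₁ := by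
  rw [counterexamplePsi, counterexamplePsi, mul_comm]

/-- The path `t ↦ (e^t, e^{T−t})` stays on the hyperbola `x₁x₂ = e^T`, so it meets
`{x₁x₂ = e}` either at all times (`T = 1`) or never. -/
theorem counterexampleR_exp_exp_sub (T t : ℝ) :
    counterexampleR (Real.exp t) (Real.exp (T - t))
      = if T = 1 then Real.exp (1 - Real.exp 1) else 0 := by
  have product_eq : Real.exp t * Real.exp (T - t) = Real.exp T := by
    rw [← Real.exp_add, add_sub_cancel]
  rw [counterexampleR, product_eq]
  simp only [Real.exp_eq_exp]
  refine if_ctx_congr Iff.rfl (fun hT => ?_) fun _ => rfl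
  rw [hT, ← Real.exp_add, ← sub_eq_add_neg]

theorem integral_counterexampleR (T : ℝ) :
    ∫ t in (0 : ℝ)..T, counterexampleR (Real.exp t) (Real.exp (T - t))
      = if T = 1 then Real.exp (1 - Real.exp 1) else 0 := by
  simp only [counterexampleR_exp_exp_sub, intervalIntegral.integral_const, sub_zero, smul_eq_mul]
  split_ifs with hT
  · rw [hT, one_mul]
  · exact mul_zero T

theorem counterexample_duality_iff (T : ℝ) :
    counterexamplePsi (Real.exp T) (Real.exp 0) - counterexamplePsi (Real.exp 0) (Real.exp T)
        = ∫ t in (0 : ℝ)..T, counterexampleR (Real.exp t) (Real.exp (T - t))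
      ↔ T ≠ 1 := by
  rw [counterexamplePsi_comm, sub_self, integral_counterexampleR, eq_comm, ite_eq_right_iff]
  exact imp_congr_right fun _ => iff_false_intro (Real.exp_ne_zero _)

/-- Counterexample of the correction note: with `X¹_t = X²_t = e^t`,
`∫₀ᵀ R(e^t, e^{T−t}) dt = 1_{{T=1}} e^{1−e}`, the duality left-hand side vanishes
identically, the duality identity holds for Lebesgue-a.e. `T ≥ 0`, but fails at
`T = 1`. -/
theorem counterexample_duality_fails_at_one :
    (∀ T : ℝ, 0 ≤ T →
      ∫ t in (0 : ℝ)..T, counterexampleR (Real.exp t) (Real.exp (T - t))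
        = if T = 1 then Real.exp (1 - Real.exp 1) else 0)
    ∧ (∀ T : ℝ, 0 ≤ T →
        counterexamplePsi (Real.exp T) (Real.exp 0)
          - counterexamplePsi (Real.exp 0) (Real.exp T) = 0)
    ∧ (∀ᵐ T ∂(volume.restrict (Ici (0 : ℝ))),
        counterexamplePsi (Real.exp T) (Real.exp 0)
            - counterexamplePsi (Real.exp 0) (Real.exp T)
          = ∫ t in (0 : ℝ)..T, counterexampleR (Real.exp t) (Real.exp (T - t)))
    ∧ ¬ (counterexamplePsi (Real.exp 1) (Real.exp 0)
            - counterexamplePsi (Real.exp 0) (Real.exp 1)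
          = ∫ t in (0 : ℝ)..(1 : ℝ),
              counterexampleR (Real.exp t) (Real.exp (1 - t))) := by
  refine ⟨fun T _ => integral_counterexampleR T,
    fun T _ => sub_eq_zero.mpr (counterexamplePsi_comm _ _), ?_,
    fun duality => (counterexample_duality_iff 1).mp duality rfl⟩
  filter_upwards [Measure.ae_ne _ 1] with T hT
  exact (counterexample_duality_iff T).mpr hT
end
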